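/- Let H be a real Hilbert space and n ≥ 2. There exists a map r : H(n) → H(n−1) such that r(S) = S for every S ∈ H(n−1) (i.e., every nonempty subset S of H with at most n−1 elements), and r is Lipschitz with respect to the Hausdorff metric: d_H(r(S), r(T)) ≤ max(n^{3/2}, 2n−1) · d_H(S, T) for all S, T ∈ H(n). -/

import Mathlib

/-!
Identify a family of points `u : ι → H` with a vector of the `ℓ²` sum `H^ι`, and let `f u` be the
sum of the distances between its points, a convex function. A set of fewer than `n` points is left
alone; a set `S` of exactly `n` points is moved by the proximal map `(1 + τ ∂f)⁻¹`, where `τ` is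
half the separation of `S`. The points move with speed at most `n - 1`, while any two points
approach each other with relative speed at least `2`, so a closest pair of `S` merges.

Let `d` be the Hausdorff distance from `S` to `T`. If `2d` is less than the separation of an
`n`-point set `S`, then the points of `S` and `T` are matched bijectively within `d`. The families
then differ by at most `√n d` in `H^ι` and the parameters by at most `d`; since proximal maps
are nonexpansive and `‖∂f‖ ≤ √n (n - 1)`, the images differ by at most `√n d + √n (n - 1) d`.
Otherwise `S` and `T` each move by at most `(n - 1) d`, for a total of `(2n - 1) d`.
-/

open Filter Metric Set Topology
open scoped Finset RealInnerProductSpace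

lemma exists_forall_add_mul_dist_sq_le {X : Type*} [PseudoMetricSpace X] [ProperSpace X]
    {f : X → ℝ} {c : ℝ} (hf : Continuous f) (hbdd : BddBelow (range f)) (hc : 0 < c) (x : X) :
    ∃ u, ∀ w, f u + c * dist x u ^ 2 ≤ f w + c * dist x w ^ 2 := by
  have : Nonempty X := ⟨x⟩
  obtain ⟨m, hm⟩ := hbdd
  refine Continuous.exists_forall_le (by fun_prop)
    (tendsto_atTop_add_left_of_le _ m (fun w ↦ hm (mem_range_self w)) ?_)
  exact ((tendsto_pow_atTop two_ne_zero).comp (tendsto_dist_left_cocompact_atTop x)).const_mul_atTop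
    hc

section Subgradient

variable {E F : Type*} [NormedAddCommGroup E] [InnerProductSpace ℝ E]
  [NormedAddCommGroup F] [InnerProductSpace ℝ F]
  {f : E → ℝ} {a b u v x : E} {c σ τ : ℝ}

/-- `a` is a subgradient of `f` at `u`, in the sense of convex analysis: `a ∈ ∂f(u)`. -/
def IsSubgradientAt (f : E → ℝ) (a u : E) : Prop :=
  ∀ w, f u + ⟪a, w - u⟫ ≤ f w

lemma IsSubgradientAt.inner_sub_sub_nonneg (ha : IsSubgradientAt f a u)
    (hb : IsSubgradientAt f b v) : 0 ≤ ⟪a - b, u - v⟫ := by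
  have hu := ha v
  have hv := hb u
  rw [← neg_sub u v, inner_neg_right] at hu
  rw [inner_sub_left]
  linarith

lemma norm_le_norm_add_of_inner_nonneg (h : 0 ≤ ⟪u, v⟫) : ‖u‖ ≤ ‖u + v‖ := by
  refine le_of_sq_le_sq ?_ (norm_nonneg _)
  rw [norm_add_sq_real]
  linarith [sq_nonneg ‖v‖]

lemma IsSubgradientAt.norm_sub_le (ha : IsSubgradientAt f a u) (hb : IsSubgradientAt f b v)
    (hτ : 0 ≤ τ) : ‖u - v‖ ≤ ‖(u + τ • a) - (v + σ • b)‖ + |τ - σ| * ‖b‖ := by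
  have hinner : 0 ≤ ⟪u - v, τ • (a - b)⟫ := by
    rw [real_inner_smul_right, real_inner_comm]
    exact mul_nonneg hτ (ha.inner_sub_sub_nonneg hb)
  calc ‖u - v‖ ≤ ‖u - v + τ • (a - b)‖ := norm_le_norm_add_of_inner_nonneg hinner
    _ = ‖((u + τ • a) - (v + σ • b)) - (τ - σ) • b‖ := by congr 1; module
    _ ≤ ‖(u + τ • a) - (v + σ • b)‖ + |τ - σ| * ‖b‖ := by
      rw [← Real.norm_eq_abs, ← norm_smul]
      exact _root_.norm_sub_le _ _

lemma IsSubgradientAt.eq_of_add_smul_eq (ha : IsSubgradientAt f a u) (hb : IsSubgradientAt f b v)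
    (hτ : 0 ≤ τ) (h : u + τ • a = v + τ • b) : u = v := by
  simpa [h, sub_eq_zero] using ha.norm_sub_le hb (σ := τ) hτ

lemma IsSubgradientAt.map (L : E ≃ₗᵢ[ℝ] F) (h : IsSubgradientAt f a u) :
    IsSubgradientAt (f ∘ L.symm) (L a) (L u) := fun w ↦ by
  simpa [← L.inner_map_map a] using h (L.symm w)

lemma isSubgradientAt_of_forall_add_mul_dist_sq_le (hf : ConvexOn ℝ univ f)
    (hu : ∀ w, f u + c * dist x u ^ 2 ≤ f w + c * dist x w ^ 2) :
    IsSubgradientAt f ((2 * c) • (x - u)) u := fun w ↦ by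
  have hslope : ∀ t ∈ Ioc (0 : ℝ) 1,
      f u + ⟪(2 * c) • (x - u), w - u⟫ ≤ f w + t * (c * ‖w - u‖ ^ 2) := fun t ht ↦ by
    have hmin := hu ((1 - t) • u + t • w)
    have hconv := hf.2 (mem_univ u) (mem_univ w) (sub_nonneg.2 ht.2) ht.1.le (by ring)
    have hnorm : ‖x - ((1 - t) • u + t • w)‖ ^ 2 =
        ‖x - u‖ ^ 2 - 2 * (t * ⟪x - u, w - u⟫) + t ^ 2 * ‖w - u‖ ^ 2 := by
      rw [show x - ((1 - t) • u + t • w) = (x - u) - t • (w - u) by module, norm_sub_sq_real,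
        real_inner_smul_right, norm_smul, mul_pow, Real.norm_eq_abs, sq_abs]
    rw [real_inner_smul_left]
    rw [dist_eq_norm, dist_eq_norm, hnorm] at hmin
    simp only [smul_eq_mul] at hconv
    refine le_of_mul_le_mul_left ?_ ht.1
    linarith
  have hlim : Tendsto (fun t : ℝ ↦ f w + t * (c * ‖w - u‖ ^ 2)) (𝓝[>] 0) (𝓝 (f w)) := by
    have : Continuous fun t : ℝ ↦ f w + t * (c * ‖w - u‖ ^ 2) := by fun_prop
    simpa using this.continuousWithinAt (s := Ioi 0) (x := 0) |>.tendsto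
  exact ge_of_tendsto hlim (eventually_of_mem (Ioc_mem_nhdsGT one_pos) hslope)

lemma exists_isSubgradientAt_add_smul_eq [FiniteDimensional ℝ E]
    (hf : ConvexOn ℝ univ f) (hbdd : BddBelow (range f)) (hτ : 0 < τ) (x : E) :
    ∃ a u, IsSubgradientAt f a u ∧ u + τ • a = x := by
  have := FiniteDimensional.proper_real E
  obtain ⟨u, hu⟩ := exists_forall_add_mul_dist_sq_le hf.locallyLipschitz.continuous hbdd
    (c := (2 * τ)⁻¹) (by positivity) x
  refine ⟨_, u, isSubgradientAt_of_forall_add_mul_dist_sq_le hf hu, ?_⟩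
  rw [smul_smul, show τ * (2 * (2 * τ)⁻¹) = 1 by field_simp, one_smul, add_sub_cancel]

end Subgradient

section SumDist

variable {ι κ X Y : Type*} [PseudoMetricSpace X] [PseudoMetricSpace Y]

/-- The length of the edge `e` between points of the family `u`, a function on unordered pairs of
indices. -/
def pairDist (u : ι → X) : Sym2 ι → ℝ :=
  Sym2.lift ⟨fun i j ↦ dist (u i) (u j), fun _ _ ↦ dist_comm _ _⟩

@[simp]
lemma pairDist_mk (u : ι → X) (i j : ι) : pairDist u s(i, j) = dist (u i) (u j) := rfl

lemma pairDist_nonneg (u : ι → X) : ∀ e, 0 ≤ pairDist u e :=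
  Sym2.ind fun _ _ ↦ dist_nonneg

lemma pairDist_comp_right (u : ι → X) (g : κ → ι) :
    ∀ e, pairDist (u ∘ g) e = pairDist u (e.map g) :=
  Sym2.ind fun _ _ ↦ rfl

lemma pairDist_comp_le_of_lipschitzWith {g : X → Y} (hg : LipschitzWith 1 g) (u : ι → X) :
    ∀ e, pairDist (g ∘ u) e ≤ pairDist u e :=
  Sym2.ind fun _ _ ↦ by simpa using hg.dist_le_mul _ _

variable [Fintype ι] [DecidableEq ι] [Fintype κ] [DecidableEq κ]

/-- The sum of all distances between points of the family `u`, each pair of distinct indices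
counted once: the total length of the edges of the complete graph on `u`. -/
def sumDist (u : ι → X) : ℝ :=
  ∑ e ∈ (⊤ : SimpleGraph ι).edgeFinset, pairDist u e

lemma sumDist_nonneg (u : ι → X) : 0 ≤ sumDist u :=
  Finset.sum_nonneg fun e _ ↦ pairDist_nonneg u e

lemma sumDist_comp_equiv (u : ι → X) (σ : κ ≃ ι) : sumDist (u ∘ σ) = sumDist u := by
  simp only [sumDist, pairDist_comp_right]
  refine Finset.sum_nbij' (Sym2.map σ) (Sym2.map σ.symm) ?_ ?_ ?_ ?_ ?_ <;>
    simp [Sym2.isDiag_map, Sym2.map_map, σ.injective, σ.symm.injective]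

lemma sumDist_comp_le_of_lipschitzWith {g : X → Y} (hg : LipschitzWith 1 g) (u : ι → X) :
    sumDist (g ∘ u) ≤ sumDist u :=
  Finset.sum_le_sum fun e _ ↦ pairDist_comp_le_of_lipschitzWith hg u e

lemma sumDist_eq_dist_add (u : ι → X) {i j : ι} (hij : i ≠ j) :
    sumDist u = dist (u i) (u j) +
      ∑ e ∈ (⊤ : SimpleGraph ι).edgeFinset.erase s(i, j), pairDist u e :=
  (Finset.add_sum_erase _ (pairDist u) (a := s(i, j)) (by simpa using hij)).symm

end SumDist

section NormedSumDist

variable {ι H : Type*} [NormedAddCommGroup H]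

lemma convexOn_pairDist [NormedSpace ℝ H] :
    ∀ e : Sym2 ι, ConvexOn ℝ univ fun u : ι → H ↦ pairDist u e :=
  Sym2.ind fun i j ↦ (convexOn_univ_norm.comp_linearMap
    (LinearMap.proj (R := ℝ) (φ := fun _ : ι ↦ H) i - LinearMap.proj j)).congr
      fun u _ ↦ by simp [dist_eq_norm]

lemma pairDist_add_single_le [DecidableEq ι] (u : ι → H) (i : ι) (h : H) :
    ∀ e, pairDist (u + Pi.single i h) e ≤ pairDist u e + if i ∈ e then ‖h‖ else 0 :=
  Sym2.ind fun k l ↦ by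
    rcases eq_or_ne i k with rfl | hk <;> rcases eq_or_ne i l with rfl | hl
    · simp
    · simpa [Pi.single_eq_of_ne' hl, dist_eq_norm, add_sub_right_comm] using norm_add_le _ _
    · simpa [Pi.single_eq_of_ne' hk, dist_eq_norm, ← sub_sub] using norm_sub_le _ _
    · simp [hk, hl]

variable [Fintype ι] [DecidableEq ι]

lemma convexOn_sumDist [NormedSpace ℝ H] : ConvexOn ℝ univ (sumDist : (ι → H) → ℝ) := by
  refine ⟨convex_univ, fun u _ v _ a b ha hb hab ↦ ?_⟩
  simp only [sumDist, smul_eq_mul, Finset.mul_sum, ← Finset.sum_add_distrib]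
  exact Finset.sum_le_sum fun e _ ↦ (convexOn_pairDist e).2 (mem_univ u) (mem_univ v) ha hb hab

lemma sumDist_add_single_le (u : ι → H) (i : ι) (h : H) :
    sumDist (u + Pi.single i h) ≤ sumDist u + (Fintype.card ι - 1) * ‖h‖ := by
  have hcard : (#{e ∈ (⊤ : SimpleGraph ι).edgeFinset | i ∈ e} : ℝ) = Fintype.card ι - 1 := by
    rw [← SimpleGraph.incidenceFinset_eq_filter, SimpleGraph.card_incidenceFinset_eq_degree,
      SimpleGraph.IsRegularOfDegree.top.degree_eq i, Nat.cast_pred (Fintype.card_pos_iff.2 ⟨i⟩)]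
  calc sumDist (u + Pi.single i h)
      ≤ ∑ e ∈ (⊤ : SimpleGraph ι).edgeFinset, (pairDist u e + if i ∈ e then ‖h‖ else 0) :=
        Finset.sum_le_sum fun e _ ↦ pairDist_add_single_le u i h e
    _ = sumDist u + (Fintype.card ι - 1) * ‖h‖ := by
      rw [Finset.sum_add_distrib, ← Finset.sum_filter, Finset.sum_const, nsmul_eq_mul, hcard,
        sumDist]

/- Averaging `u` with its image under the transposition `(i j)` collapses the edge from `i` to `j`,
while by convexity the total length of the other edges does not increase. -/
lemma sumDist_midpoint_comp_swap_le [NormedSpace ℝ H] (u : ι → H) {i j : ι} (hij : i ≠ j) :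
    sumDist (midpoint ℝ u (u ∘ Equiv.swap i j)) ≤ sumDist u - dist (u i) (u j) := by
  set v := u ∘ Equiv.swap i j with hv
  have hcollapse : midpoint ℝ u v i = midpoint ℝ u v j := by
    simp [hv, midpoint_comm]
  have hother : ∀ e, pairDist (midpoint ℝ u v) e ≤ 2⁻¹ * pairDist u e + 2⁻¹ * pairDist v e := by
    rw [midpoint_eq_smul_add, invOf_eq_inv, smul_add]
    exact fun e ↦ (convexOn_pairDist e).2 (mem_univ u) (mem_univ v) (by norm_num) (by norm_num)
      (by norm_num)
  have hu := sumDist_eq_dist_add u hij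
  have hw := sumDist_eq_dist_add v hij
  rw [hv, sumDist_comp_equiv, ← hv, show dist (v i) (v j) = dist (u i) (u j) by
    simp [hv, dist_comm]] at hw
  calc sumDist (midpoint ℝ u v)
      = ∑ e ∈ (⊤ : SimpleGraph ι).edgeFinset.erase s(i, j), pairDist (midpoint ℝ u v) e := by
        rw [sumDist_eq_dist_add _ hij, hcollapse, dist_self, zero_add]
    _ ≤ ∑ e ∈ (⊤ : SimpleGraph ι).edgeFinset.erase s(i, j),
          (2⁻¹ * pairDist u e + 2⁻¹ * pairDist v e) :=
        Finset.sum_le_sum fun e _ ↦ hother e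
    _ = sumDist u - dist (u i) (u j) := by
        rw [Finset.sum_add_distrib, ← Finset.mul_sum, ← Finset.mul_sum]
        linarith

end NormedSumDist

section Config

/-- Families of points of `H` indexed by `ι`, as vectors of the `ℓ²` direct sum `H^ι`. -/
abbrev Config (ι H : Type*) : Type _ := PiLp 2 fun _ : ι ↦ H

variable {ι κ H : Type*} [Fintype ι] [NormedAddCommGroup H]

lemma Config.norm_le_sqrt_card_mul {z : Config ι H} {d : ℝ} (h : ∀ i, ‖z i‖ ≤ d) :
    ‖z‖ ≤ √(Fintype.card ι) * d := by
  rcases isEmpty_or_nonempty ι with _ | ⟨⟨i⟩⟩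
  · simp [PiLp.norm_eq_of_L2]
  have hd : 0 ≤ d := (norm_nonneg _).trans (h i)
  calc ‖z‖ ≤ √(∑ _ : ι, d ^ 2) := by
        rw [PiLp.norm_eq_of_L2]
        gcongr with i
        exact h i
    _ = √(Fintype.card ι) * d := by simp [Real.sqrt_sq hd]

variable [InnerProductSpace ℝ H] [DecidableEq ι] {a u x : Config ι H} {τ : ℝ} {i j : ι}

lemma IsSubgradientAt.norm_apply_le (h : IsSubgradientAt (sumDist ∘ WithLp.ofLp) a u) (i : ι) :
    ‖a i‖ ≤ Fintype.card ι - 1 := by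
  have hcard : (1 : ℝ) ≤ Fintype.card ι := mod_cast Fintype.card_pos_iff.2 ⟨i⟩
  have hinner : ⟪a, PiLp.single 2 i (a i)⟫ = ‖a i‖ * ‖a i‖ := by
    rw [PiLp.inner_apply, Fintype.sum_eq_single i fun k hk ↦ by simp [hk],
      PiLp.single_eq_same, real_inner_self_eq_norm_mul_norm]
  have htest : sumDist u.ofLp + ‖a i‖ * ‖a i‖ ≤
      sumDist u.ofLp + (Fintype.card ι - 1) * ‖a i‖ := by
    have := h (u + PiLp.single 2 i (a i))
    rw [add_sub_cancel_left, hinner] at this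
    exact this.trans (sumDist_add_single_le _ _ _)
  by_contra! hlt
  nlinarith

lemma IsSubgradientAt.two_mul_norm_sub_le_inner (h : IsSubgradientAt (sumDist ∘ WithLp.ofLp) a u)
    (hij : i ≠ j) : 2 * ‖u i - u j‖ ≤ ⟪a i - a j, u i - u j⟫ := by
  set w : Config ι H := WithLp.toLp 2 (midpoint ℝ u.ofLp (u.ofLp ∘ Equiv.swap i j)) with hw
  have hsub (k : ι) : (w - u) k = (2⁻¹ : ℝ) • (u (Equiv.swap i j k) - u k) := by
    simp [hw, midpoint_sub_left]
  have hinner : ⟪a, w - u⟫ = -2⁻¹ * ⟪a i - a j, u i - u j⟫ := by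
    rw [PiLp.inner_apply, Fintype.sum_eq_add i j hij fun k hk ↦ by
      rw [hsub, Equiv.swap_apply_of_ne_of_ne hk.1 hk.2, sub_self, smul_zero, inner_zero_right]]
    simp only [hsub, Equiv.swap_apply_left, Equiv.swap_apply_right, real_inner_smul_right,
      inner_sub_left, inner_sub_right]
    ring
  have htest := (h w).trans (sumDist_midpoint_comp_swap_le u.ofLp hij)
  rw [hinner, dist_eq_norm] at htest
  simp only [Function.comp_apply] at htest
  linarith

lemma IsSubgradientAt.apply_eq_of_dist_le (h : IsSubgradientAt (sumDist ∘ WithLp.ofLp) a u)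
    (hx : u + τ • a = x) (hτ : 0 ≤ τ) (hij : dist (x i) (x j) ≤ 2 * τ) : u i = u j := by
  rcases eq_or_ne i j with rfl | hne
  · rfl
  have hinner : ⟪x i - x j, u i - u j⟫ =
      ‖u i - u j‖ * ‖u i - u j‖ + τ * ⟪a i - a j, u i - u j⟫ := by
    rw [← real_inner_self_eq_norm_mul_norm, ← real_inner_smul_left, ← inner_add_left, ← hx]
    simp only [PiLp.add_apply, PiLp.smul_apply]
    congr 1
    module
  have hmono := mul_le_mul_of_nonneg_left (h.two_mul_norm_sub_le_inner hne) hτ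
  have hcs : ⟪x i - x j, u i - u j⟫ ≤ 2 * τ * ‖u i - u j‖ :=
    (real_inner_le_norm _ _).trans (by gcongr; rwa [← dist_eq_norm])
  rw [← sub_eq_zero, ← norm_le_zero_iff]
  nlinarith

/- In the finite-dimensional span `V` of the family, minimisers exist by compactness; the orthogonal
projection onto `V` does not increase `sumDist`, so a subgradient in `V` is one in `H`. -/
lemma exists_isSubgradientAt_sumDist_add_smul_eq (x : Config ι H) (hτ : 0 < τ) :
    ∃ a u : Config ι H, IsSubgradientAt (sumDist ∘ WithLp.ofLp) a u ∧ u + τ • a = x := by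
  let V := Submodule.span ℝ (range x)
  have : FiniteDimensional ℝ V := FiniteDimensional.span_of_finite ℝ (finite_range x)
  let xV : Config ι V := WithLp.toLp 2 fun i ↦ ⟨x i, Submodule.subset_span (mem_range_self i)⟩
  have hconv : ConvexOn ℝ univ (sumDist ∘ WithLp.ofLp : Config ι V → ℝ) :=
    (convexOn_sumDist (ι := ι) (H := V)).comp_linearMap
      (WithLp.linearEquiv 2 ℝ (ι → V)).toLinearMap
  have hbdd : BddBelow (range (sumDist ∘ WithLp.ofLp : Config ι V → ℝ)) :=
    ⟨0, forall_mem_range.2 fun u ↦ sumDist_nonneg u.ofLp⟩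
  obtain ⟨a, u, ha, hx⟩ := exists_isSubgradientAt_add_smul_eq hconv hbdd hτ xV
  refine ⟨WithLp.toLp 2 fun i ↦ (a i : H), WithLp.toLp 2 fun i ↦ (u i : H), fun w ↦ ?_, ?_⟩
  · have hinner : ⟪a, WithLp.toLp 2 (V.orthogonalProjectionOnto ∘ w.ofLp) - u⟫ =
        ⟪WithLp.toLp 2 fun i ↦ (a i : H), w - WithLp.toLp 2 fun i ↦ (u i : H)⟫ := by
      simp [PiLp.inner_apply, inner_sub_right]
    calc _ ≤ sumDist u.ofLp + ⟪a, WithLp.toLp 2 (V.orthogonalProjectionOnto ∘ w.ofLp) - u⟫ := by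
          rw [hinner]
          gcongr
          exact sumDist_comp_le_of_lipschitzWith (LipschitzWith.subtype_val _) u.ofLp
      _ ≤ sumDist (V.orthogonalProjectionOnto ∘ w.ofLp) := ha _
      _ ≤ sumDist w.ofLp := sumDist_comp_le_of_lipschitzWith
          (V.orthogonalProjectionOnto.lipschitz.weaken V.orthogonalProjectionOnto_norm_le) w.ofLp
  · ext i
    simpa [xV] using congrArg (fun z : Config ι V ↦ (z i : H)) hx

/-- The proximal map `(1 + τ ∂f)⁻¹` of the convex function `f = sumDist` on `H^ι`. It is specified
by its defining equation, which is only guaranteed to be solvable for `0 < τ`. -/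
noncomputable def prox (τ : ℝ) (x : Config ι H) : Config ι H :=
  Classical.epsilon fun u ↦ ∃ a, IsSubgradientAt (sumDist ∘ WithLp.ofLp) a u ∧ u + τ • a = x

lemma exists_isSubgradientAt_prox (x : Config ι H) (hτ : 0 < τ) :
    ∃ a, IsSubgradientAt (sumDist ∘ WithLp.ofLp) a (prox τ x) ∧ prox τ x + τ • a = x :=
  Classical.epsilon_spec
    (p := fun u ↦ ∃ a, IsSubgradientAt (sumDist ∘ WithLp.ofLp) a u ∧ u + τ • a = x) <| by
      obtain ⟨a, u, h⟩ := exists_isSubgradientAt_sumDist_add_smul_eq x hτ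
      exact ⟨u, a, h⟩

lemma prox_apply_eq_of_dist_le (hτ : 0 < τ) (hij : dist (x i) (x j) ≤ 2 * τ) :
    prox τ x i = prox τ x j := by
  obtain ⟨a, ha, hx⟩ := exists_isSubgradientAt_prox x hτ
  exact ha.apply_eq_of_dist_le hx hτ.le hij

lemma dist_prox_apply_self_le (hτ : 0 < τ) (x : Config ι H) (i : ι) :
    dist (prox τ x i) (x i) ≤ (Fintype.card ι - 1) * τ := by
  obtain ⟨a, ha, hx⟩ := exists_isSubgradientAt_prox x hτ
  calc dist (prox τ x i) (x i) = ‖a i‖ * τ := by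
        nth_rw 2 [← hx]
        simp [norm_smul, abs_of_pos hτ, mul_comm]
    _ ≤ (Fintype.card ι - 1) * τ := by
      gcongr
      exact ha.norm_apply_le i

lemma dist_prox_prox_le {σ : ℝ} (hτ : 0 < τ) (hσ : 0 < σ) (x y : Config ι H) :
    dist (prox τ x) (prox σ y) ≤
      dist x y + |τ - σ| * (√(Fintype.card ι) * (Fintype.card ι - 1)) := by
  obtain ⟨a, ha, hx⟩ := exists_isSubgradientAt_prox x hτ
  obtain ⟨b, hb, hy⟩ := exists_isSubgradientAt_prox y hσ
  have hle := ha.norm_sub_le hb hτ.le (σ := σ)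
  rw [hx, hy, ← dist_eq_norm, ← dist_eq_norm] at hle
  refine hle.trans ?_
  gcongr
  exact Config.norm_le_sqrt_card_mul hb.norm_apply_le

lemma prox_comp_equiv [Fintype κ] [DecidableEq κ] (hτ : 0 < τ) (x : Config ι H) (e : κ ≃ ι) :
    prox τ (WithLp.toLp 2 (x ∘ e)) = WithLp.toLp 2 (prox τ x ∘ e) := by
  obtain ⟨a, ha, hx⟩ := exists_isSubgradientAt_prox x hτ
  obtain ⟨b, hb, hy⟩ := exists_isSubgradientAt_prox (WithLp.toLp 2 (x ∘ e)) hτ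
  let L := LinearIsometryEquiv.piLpCongrLeft 2 ℝ H e.symm
  have hL (v : Config ι H) : L v = WithLp.toLp 2 (v ∘ e) := by
    ext k
    simp [L]
  have hf : (sumDist ∘ WithLp.ofLp) ∘ L.symm = (sumDist ∘ WithLp.ofLp : Config κ H → ℝ) := by
    ext w
    obtain ⟨v, rfl⟩ := L.surjective w
    simp only [Function.comp_apply, L.symm_apply_apply]
    rw [hL]
    exact (sumDist_comp_equiv v.ofLp e).symm
  rw [← hL] at hb hy ⊢
  rw [← hL]
  have hLa := ha.map L
  rw [hf] at hLa
  exact hb.eq_of_add_smul_eq hLa hτ.le (by rw [hy, ← map_smul, ← map_add, hx])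

lemma dist_prox_apply_equiv_le [Fintype κ] [DecidableEq κ] {σ d : ℝ} {y : Config κ H}
    (hτ : 0 < τ) (hσ : 0 < σ) (hτσ : |τ - σ| ≤ d) (e : ι ≃ κ)
    (h : ∀ i, dist (x i) (y (e i)) ≤ d) (i : ι) :
    dist (prox τ x i) (prox σ y (e i)) ≤ Fintype.card ι * √(Fintype.card ι) * d := by
  have hcard : (1 : ℝ) ≤ Fintype.card ι := mod_cast Fintype.card_pos_iff.2 ⟨i⟩
  have hxy : dist x (WithLp.toLp 2 (y ∘ e)) ≤ √(Fintype.card ι) * d := by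
    rw [dist_eq_norm]
    exact Config.norm_le_sqrt_card_mul fun k ↦ by simpa [dist_eq_norm] using h k
  calc dist (prox τ x i) (prox σ y (e i))
      = ‖(prox τ x - prox σ (WithLp.toLp 2 (y ∘ e))) i‖ := by
        rw [prox_comp_equiv hσ, dist_eq_norm]
        rfl
    _ ≤ dist (prox τ x) (prox σ (WithLp.toLp 2 (y ∘ e))) := by
      rw [dist_eq_norm]
      exact PiLp.norm_apply_le _ i
    _ ≤ √(Fintype.card ι) * d + d * (√(Fintype.card ι) * (Fintype.card ι - 1)) := by
      refine (dist_prox_prox_le hτ hσ _ _).trans ?_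
      gcongr
    _ = Fintype.card ι * √(Fintype.card ι) * d := by ring

end Config

section HausdorffDist

variable {X : Type*} [PseudoMetricSpace X] {d : ℝ}

lemma hausdorffDist_range_range_le {α β : Type*} {f : α → X} {g : β → X} (e : α ≃ β) (hd : 0 ≤ d)
    (h : ∀ a, dist (f a) (g (e a)) ≤ d) : hausdorffDist (range f) (range g) ≤ d := by
  refine hausdorffDist_le_of_mem_dist hd (forall_mem_range.2 fun a ↦ ⟨_, mem_range_self (e a), h a⟩)
    (forall_mem_range.2 fun b ↦ ⟨_, mem_range_self (e.symm b), ?_⟩)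
  simpa [dist_comm] using h (e.symm b)

lemma infsep_le_infsep_add {s t : Set X} (hs : s.Nontrivial) (f : s ↪ t)
    (h : ∀ p : s, dist (p : X) (f p) ≤ d) : t.infsep ≤ s.infsep + 2 * d := by
  rw [← sub_le_iff_le_add]
  refine hs.le_infsep fun x hx y hy hxy ↦ ?_
  have hne : (f ⟨x, hx⟩ : X) ≠ f ⟨y, hy⟩ := by
    simpa [Subtype.coe_inj, f.injective.eq_iff] using hxy
  have hsep := infsep_le_dist_of_mem (f ⟨x, hx⟩).2 (f ⟨y, hy⟩).2 hne
  have htri := dist_triangle4_right (f ⟨x, hx⟩ : X) (f ⟨y, hy⟩) x y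
  have hxd : dist (f ⟨x, hx⟩ : X) x ≤ d := dist_comm x _ ▸ h ⟨x, hx⟩
  have hyd : dist (f ⟨y, hy⟩ : X) y ≤ d := dist_comm y _ ▸ h ⟨y, hy⟩
  linarith

lemma abs_infsep_sub_infsep_le {s t : Set X} (hs : s.Nontrivial) (e : s ≃ t)
    (h : ∀ p : s, dist (p : X) (e p) ≤ d) : |s.infsep - t.infsep| ≤ 2 * d := by
  have ht : t.Nontrivial := nontrivial_coe_sort.1 (e.nontrivial_congr.1 hs.coe_sort)
  have hst := infsep_le_infsep_add hs e.toEmbedding h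
  have hts := infsep_le_infsep_add ht e.symm.toEmbedding (d := d) fun q ↦ by
    simpa [dist_comm] using h (e.symm q)
  rw [abs_le]
  constructor <;> linarith

lemma hausdorffEDist_coe_finset_ne_top {S T : Finset X} (hS : S.Nonempty) (hT : T.Nonempty) :
    hausdorffEDist (S : Set X) T ≠ ⊤ :=
  hausdorffEDist_ne_top_of_nonempty_of_bounded hS hT S.finite_toSet.isBounded
    T.finite_toSet.isBounded

lemma exists_equiv_dist_le_hausdorffDist {S T : Finset X} (hT : T.Nonempty) (hcard : #T ≤ #S)
    (hsep : 2 * hausdorffDist (S : Set X) T < (S : Set X).infsep) :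
    ∃ e : S ≃ T, ∀ p : S, dist (p : X) (e p) ≤ hausdorffDist (S : Set X) T := by
  have hS : S.Nonempty := Finset.card_pos.1 (hT.card_pos.trans_le hcard)
  have hnear (p : S) : ∃ q : T, dist (p : X) q ≤ hausdorffDist (S : Set X) T := by
    obtain ⟨q, hq, hpq⟩ := T.finite_toSet.isCompact.exists_infDist_eq_dist hT (p : X)
    exact ⟨⟨q, hq⟩, hpq ▸
      infDist_le_hausdorffDist_of_mem p.2 (hausdorffEDist_coe_finset_ne_top hS hT)⟩
  choose f hf using hnear
  have hinj : Function.Injective f := fun p q hpq ↦ by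
    by_contra hne
    have hle := infsep_le_dist_of_mem p.2 q.2 (Subtype.coe_ne_coe.2 hne)
    have htri := dist_triangle_right (p : X) q (f p)
    have hp := hf p
    have hq := hf q
    rw [← hpq] at hq
    linarith
  exact ⟨.ofBijective f (hinj.bijective_of_nat_card_le (by simpa using hcard)), hf⟩

end HausdorffDist

section Retraction

variable {H : Type*} [NormedAddCommGroup H] [InnerProductSpace ℝ H] [DecidableEq H]
  {S T : Finset H} {d : ℝ} {n : ℕ}

/-- The proximal map of `sumDist` applied to the family of all points of `S`, indexed by `S` itself.
Its parameter, half the separation of `S`, is just large enough for a closest pair to merge;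
it is `0`, and the value junk, when `S` has a single point. -/
noncomputable def mergeMap (S : Finset H) : S → H :=
  (prox ((S : Set H).infsep / 2) (WithLp.toLp 2 fun p : S ↦ (p : H))).ofLp

/-- The set of points of `S` after a closest pair has been merged by `mergeMap S`. -/
noncomputable def merge (S : Finset H) : Finset H :=
  Finset.univ.image (mergeMap S)

lemma coe_merge (S : Finset H) : (merge S : Set H) = range (mergeMap S) := by
  simp [merge]

lemma merge_nonempty (hS : S.Nonempty) : (merge S).Nonempty := by
  simpa [merge] using hS

lemma card_merge_lt (hS : S.Nontrivial) : #(merge S) < #S := by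
  obtain ⟨p, hp, q, hq, hpq, hsep⟩ := S.finite_toSet.infsep_exists_of_nontrivial hS
  have hmerge : mergeMap S ⟨p, hp⟩ = mergeMap S ⟨q, hq⟩ :=
    prox_apply_eq_of_dist_le (half_pos (S.infsep_pos_iff_nontrivial.2 hS))
      (by rw [mul_div_cancel₀ _ two_ne_zero, hsep])
  rw [← Fintype.card_coe S]
  refine Finset.card_image_le.lt_of_ne fun hcard ↦ hpq ?_
  have hinj : Function.Injective (mergeMap S) := by simpa using Finset.card_image_iff.1 hcard
  exact Subtype.mk.inj (hinj hmerge)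

lemma hausdorffDist_merge_self_le (hS : S.Nontrivial) :
    hausdorffDist (merge S : Set H) S ≤ (#S - 1) * ((S : Set H).infsep / 2) := by
  have hsep : 0 < (S : Set H).infsep / 2 := half_pos (S.infsep_pos_iff_nontrivial.2 hS)
  have hcard : (1 : ℝ) ≤ #S := mod_cast hS.nonempty.card_pos
  have hrange : (S : Set H) = range fun p : S ↦ (p : H) := by simp
  calc hausdorffDist (merge S : Set H) S
      = hausdorffDist (range (mergeMap S)) (range fun p : S ↦ (p : H)) := by
        rw [coe_merge, ← hrange]
    _ ≤ (#S - 1) * ((S : Set H).infsep / 2) :=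
      hausdorffDist_range_range_le (.refl S) (mul_nonneg (sub_nonneg.2 hcard) hsep.le) fun p ↦ by
        simpa [mergeMap] using dist_prox_apply_self_le hsep (WithLp.toLp 2 fun q : S ↦ (q : H)) p

lemma hausdorffDist_merge_merge_le (hS : S.Nontrivial) (e : S ≃ T)
    (h : ∀ p : S, dist (p : H) (e p) ≤ d) :
    hausdorffDist (merge S : Set H) (merge T) ≤ #S * √(#S) * d := by
  obtain ⟨p, hp⟩ := hS.nonempty
  have hd : 0 ≤ d := dist_nonneg.trans (h ⟨p, hp⟩)
  have hT : T.Nontrivial := by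
    rwa [← Finset.one_lt_card_iff_nontrivial, ← Finset.card_eq_of_equiv e,
      Finset.one_lt_card_iff_nontrivial]
  have hsep : |(S : Set H).infsep / 2 - (T : Set H).infsep / 2| ≤ d := by
    rw [← sub_div, abs_div, abs_two, div_le_iff₀' two_pos]
    exact abs_infsep_sub_infsep_le hS e h
  rw [coe_merge, coe_merge]
  refine hausdorffDist_range_range_le e (by positivity) fun p ↦ ?_
  simpa [mergeMap] using dist_prox_apply_equiv_le (half_pos (S.infsep_pos_iff_nontrivial.2 hS))
    (half_pos (T.infsep_pos_iff_nontrivial.2 hT)) hsep e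
    (x := WithLp.toLp 2 fun p : S ↦ (p : H)) (y := WithLp.toLp 2 fun q : T ↦ (q : H)) h p

/-- The retraction `H(n) → H(n - 1)` on finite sets: sets of exactly `n` points are merged. -/
noncomputable def retraction (n : ℕ) (S : Finset H) : Finset H :=
  if #S = n then merge S else S

lemma retraction_of_card_lt (hS : #S < n) : retraction n S = S :=
  if_neg hS.ne

lemma retraction_nonempty (hS : S.Nonempty) : (retraction n S).Nonempty := by
  rw [retraction]
  split_ifs
  exacts [merge_nonempty hS, hS]

lemma card_retraction_lt (hn : 2 ≤ n) (hS : #S ≤ n) : #(retraction n S) < n := by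
  rw [retraction]
  split_ifs with h
  · exact h ▸ card_merge_lt (Finset.one_lt_card_iff_nontrivial.1 (h ▸ hn))
  · exact hS.lt_of_ne h

lemma hausdorffDist_retraction_self_le (hn : 2 ≤ n) (hd : 0 ≤ d)
    (h : #S = n → (S : Set H).infsep ≤ 2 * d) :
    hausdorffDist (retraction n S : Set H) S ≤ (n - 1) * d := by
  have hn' : (1 : ℝ) ≤ n := mod_cast one_le_two.trans hn
  rw [retraction]
  split_ifs with hS
  · subst hS
    refine (hausdorffDist_merge_self_le (Finset.one_lt_card_iff_nontrivial.1 hn)).trans ?_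
    gcongr
    linarith [h rfl]
  · rw [hausdorffDist_self_zero]
    exact mul_nonneg (sub_nonneg.2 hn') hd

lemma hausdorffDist_retraction_retraction_le_of_lt_infsep (hn : 2 ≤ n) (hT : T.Nonempty)
    (hTn : #T ≤ n) (hSn : #S = n)
    (hsep : 2 * hausdorffDist (S : Set H) T < (S : Set H).infsep) :
    hausdorffDist (retraction n S : Set H) (retraction n T) ≤
      n * √n * hausdorffDist (S : Set H) T := by
  obtain ⟨e, he⟩ := exists_equiv_dist_le_hausdorffDist hT (hSn ▸ hTn) hsep
  have hTS : #T = n := hSn ▸ (Finset.card_eq_of_equiv e).symm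
  rw [retraction, if_pos hSn, retraction, if_pos hTS]
  subst hSn
  exact hausdorffDist_merge_merge_le (Finset.one_lt_card_iff_nontrivial.1 hn) e he

lemma hausdorffDist_retraction_retraction_le (hn : 2 ≤ n) (hS : S.Nonempty) (hSn : #S ≤ n)
    (hT : T.Nonempty) (hTn : #T ≤ n) :
    hausdorffDist (retraction n S : Set H) (retraction n T) ≤
      max (n * √n) (2 * n - 1) * hausdorffDist (S : Set H) T := by
  set d := hausdorffDist (S : Set H) T with hd
  have hd0 : 0 ≤ d := hausdorffDist_nonneg
  by_cases hSsep : #S = n ∧ 2 * d < (S : Set H).infsep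
  · exact (hausdorffDist_retraction_retraction_le_of_lt_infsep hn hT hTn hSsep.1 hSsep.2).trans
      (mul_le_mul_of_nonneg_right (le_max_left _ _) hd0)
  by_cases hTsep : #T = n ∧ 2 * d < (T : Set H).infsep
  · rw [hd, hausdorffDist_comm (s := (S : Set H))] at hTsep ⊢
    rw [hausdorffDist_comm]
    exact (hausdorffDist_retraction_retraction_le_of_lt_infsep hn hS hSn hTsep.1 hTsep.2).trans
      (mul_le_mul_of_nonneg_right (le_max_left _ _) hausdorffDist_nonneg)
  push Not at hSsep hTsep
  calc hausdorffDist (retraction n S : Set H) (retraction n T)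
      ≤ hausdorffDist (retraction n S : Set H) S + hausdorffDist (S : Set H) (retraction n T) :=
        hausdorffDist_triangle (hausdorffEDist_coe_finset_ne_top (retraction_nonempty hS) hS)
    _ ≤ hausdorffDist (retraction n S : Set H) S +
          (d + hausdorffDist (T : Set H) (retraction n T)) := by
        gcongr
        exact hausdorffDist_triangle (hausdorffEDist_coe_finset_ne_top hS hT)
    _ ≤ (n - 1) * d + (d + (n - 1) * d) := by
        rw [hausdorffDist_comm (s := (T : Set H))]
        gcongr
        exacts [hausdorffDist_retraction_self_le hn hd0 hSsep,
          hausdorffDist_retraction_self_le hn hd0 hTsep]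
    _ = (2 * n - 1) * d := by ring
    _ ≤ max (n * √n) (2 * n - 1) * d := by
        gcongr
        exact le_max_right _ _

end Retraction

theorem lipschitz_retraction_finite_subsets_hilbert_general
    {H : Type*} [NormedAddCommGroup H] [InnerProductSpace ℝ H] (n : ℕ) (hn : 2 ≤ n) :
    ∃ r : Set H → Set H,
      (∀ S : Set H, S.Nonempty → S.Finite → S.ncard ≤ n →
        (r S).Nonempty ∧ (r S).Finite ∧ (r S).ncard ≤ n - 1) ∧
      (∀ S : Set H, S.Nonempty → S.Finite → S.ncard ≤ n - 1 → r S = S) ∧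
      (∀ S T : Set H, S.Nonempty → S.Finite → S.ncard ≤ n →
        T.Nonempty → T.Finite → T.ncard ≤ n →
        Metric.hausdorffDist (r S) (r T) ≤
          max ((n : ℝ) ^ ((3 : ℝ) / 2)) (2 * (n : ℝ) - 1) * Metric.hausdorffDist S T) := by
  classical
  let r : Set H → Set H :=
    Function.extend (fun S : Finset H ↦ (S : Set H)) (fun S ↦ retraction n S) id
  have hr (S : Finset H) : r S = retraction n S := Finset.coe_injective.extend_apply _ _ S
  have hpow : (n : ℝ) ^ ((3 : ℝ) / 2) = n * √n := by
    rw [Real.sqrt_eq_rpow, ← Real.rpow_one_add' (by positivity) (by norm_num)]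
    norm_num
  refine ⟨r, fun S hS hSf hSn ↦ ?_, fun S hS hSf hSn ↦ ?_, fun S T hS hSf hSn hT hTf hTn ↦ ?_⟩
  · lift S to Finset H using hSf
    rw [ncard_coe_finset] at hSn
    rw [hr, ncard_coe_finset]
    exact ⟨retraction_nonempty hS, Finset.finite_toSet _,
      Nat.le_sub_one_of_lt (card_retraction_lt hn hSn)⟩
  · lift S to Finset H using hSf
    rw [ncard_coe_finset] at hSn
    rw [hr, retraction_of_card_lt (by lia)]
  · lift S to Finset H using hSf
    lift T to Finset H using hTf
    rw [ncard_coe_finset] at hSn hTn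
    rw [hr, hr, hpow]
    exact hausdorffDist_retraction_retraction_le hn hS hSn hT hTn

/-- **Theorem 1.1.** Let `H` be a real Hilbert space and `n ≥ 2`. There is a Lipschitz
retraction `r : H(n) → H(n−1)`, with Lipschitz constant `max (n^{3/2}) (2n−1)` for the
Hausdorff metric, which restricts to the identity on `H(n−1)`. Here `H(m)` is the
collection of nonempty subsets of `H` with at most `m` elements. -/
theorem lipschitz_retraction_finite_subsets_hilbert
    {H : Type*} [NormedAddCommGroup H] [InnerProductSpace ℝ H] [CompleteSpace H]
    (n : ℕ) (hn : 2 ≤ n) :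
    ∃ r : Set H → Set H,
      (∀ S : Set H, S.Nonempty → S.Finite → S.ncard ≤ n →
        (r S).Nonempty ∧ (r S).Finite ∧ (r S).ncard ≤ n - 1) ∧
      (∀ S : Set H, S.Nonempty → S.Finite → S.ncard ≤ n - 1 → r S = S) ∧
      (∀ S T : Set H, S.Nonempty → S.Finite → S.ncard ≤ n →
        T.Nonempty → T.Finite → T.ncard ≤ n →
        Metric.hausdorffDist (r S) (r T) ≤
          max ((n : ℝ) ^ ((3 : ℝ) / 2)) (2 * (n : ℝ) - 1) * Metric.hausdorffDist S T) :=
  lipschitz_retraction_finite_subsets_hilbert_general n hn
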